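/- Let 𝕡 and Π be finite nonempty sets of policies, let π* be an optimal policy (V^{π*} = V* = max over all policies of V^π, values taken with initial distribution d₀), and let ν be an initial state distribution with ν(s) > 0 for all s ∈ S, so that D∞ = max_{s∈S} d^{π*}(s)/ν(s) is finite. Define the policy completeness E_ν(𝕡, Π) = max_{π∈𝕡} min_{π′∈Π} E_{s∼d^π_ν}[max_{a∈A} Q^π(s,a) − Σ_{a∈A} Q^π(s,a)·π′(a|s)]. Then for every π ∈ 𝕡: V* − V^π ≤ (D∞/(1−γ))·( E_ν(𝕡, Π)/(1−γ) + max_{π′∈Π} (∇_π V^π_ν)ᵀ(π′ − π) ). -/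

import Mathlib

/-!
By the performance difference lemma, `(1−γ)(V^{π*} − V^π)` is the mean over `d^{π*}` of
`∑_a Q^π(s,a) (π*(a|s) − π(a|s))`, which is at most the greedy gap
`g(s) = max_a Q^π(s,a) − ∑_a Q^π(s,a) π(a|s) ≥ 0`. Since `d^{π*} ≤ D∞ ν` and `(1−γ) ν ≤ d^π_ν`
pointwise, replacing `d^{π*}` by `d^π_ν` costs a factor `D∞/(1−γ)`. For any `π'`, the mean of `g`
over `d^π_ν` is the mean greedy gap of `π'` plus `1−γ` times the pairing of the gradient with
`π' − π`; the best `π' ∈ Π` turns the first summand into the policy completeness.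

The performance difference lemma needs no telescoping. The value is a linear functional `V^π` of an
arbitrary initial vector, and a one-step identity evaluates the mean of `Q^π` under `π'` as the mean
reward plus `γ V^π (P^{π'} x)`. At `x = d^{π'}_μ` the flow equation
`γ P^{π'} d^{π'}_μ = d^{π'}_μ − (1−γ) μ` then yields the claim.
-/

open Finset

noncomputable section

/-- `π` is a stochastic policy: `π s` is a probability distribution over actions. -/
def IsPolicy {S A : Type*} [Fintype A] (π : S → A → ℝ) : Prop :=
  (∀ s a, 0 ≤ π s a) ∧ ∀ s, ∑ a, π s a = 1

/-- `P` is a transition probability model: `P s a` is a distribution over next states. -/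
def IsKernel {S A : Type*} [Fintype S] (P : S → A → S → ℝ) : Prop :=
  (∀ s a s', 0 ≤ P s a s') ∧ ∀ s a, ∑ s', P s a s' = 1

/-- `d` is a probability distribution over states. -/
def IsDist {S : Type*} [Fintype S] (d : S → ℝ) : Prop :=
  (∀ s, 0 ≤ d s) ∧ ∑ s, d s = 1

/-- The Markov operator `P^π` induced by policy `π` acting on distributions over states:
`(P^π d)(s') = ∑_s ∑_a P(s'|s,a)·π(a|s)·d(s)`. -/
def markovStep {S A : Type*} [Fintype S] [Fintype A] (P : S → A → S → ℝ)
    (π : S → A → ℝ) (d : S → ℝ) : S → ℝ :=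
  fun s' => ∑ s, ∑ a, P s a s' * π s a * d s

/-- The discounted state-visitation distribution
`d^π_μ(s) = (1−γ) ∑_{t≥0} γ^t Pr(s_t = s | π, s₀ ∼ μ)`. -/
def visitDist {S A : Type*} [Fintype S] [Fintype A] (P : S → A → S → ℝ) (γ : ℝ)
    (π : S → A → ℝ) (μ : S → ℝ) : S → ℝ :=
  fun s => (1 - γ) * ∑' t : ℕ, γ ^ t * ((markovStep P π)^[t] μ) s

/-- The value function `V^π_μ = E[∑_{t≥0} γ^t r(s_t,a_t)]` with `s₀ ∼ μ`, actions from `π`. -/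
def valueV {S A : Type*} [Fintype S] [Fintype A] (P : S → A → S → ℝ) (r : S → A → ℝ)
    (γ : ℝ) (π : S → A → ℝ) (μ : S → ℝ) : ℝ :=
  ∑' t : ℕ, γ ^ t * ∑ s, ((markovStep P π)^[t] μ) s * ∑ a, π s a * r s a

/-- The state-action value function
`Q^π(s,a) = E[∑_{t≥0} γ^t r(s_t,a_t) | s₀ = s, a₀ = a, actions thereafter from π]`. -/
def valueQ {S A : Type*} [Fintype S] [Fintype A] [DecidableEq S] (P : S → A → S → ℝ)
    (r : S → A → ℝ) (γ : ℝ) (π : S → A → ℝ) (s : S) (a : A) : ℝ :=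
  r s a + γ * ∑ s', P s a s' * valueV P r γ π (fun s'' => if s'' = s' then 1 else 0)

/-- The functional policy gradient `(∇_π V^π_μ)(s,a) = (1/(1−γ))·d^π_μ(s)·Q^π(s,a)`. -/
def gradV {S A : Type*} [Fintype S] [Fintype A] [DecidableEq S] (P : S → A → S → ℝ)
    (r : S → A → ℝ) (γ : ℝ) (π : S → A → ℝ) (μ : S → ℝ) : S → A → ℝ :=
  fun s a => (1 / (1 - γ)) * visitDist P γ π μ s * valueQ P r γ π s a

/-- The pairing `xᵀ y = ∑_{s,a} x(s,a)·y(s,a)` on `ℝ^{S×A}`. -/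
def dotSA {S A : Type*} [Fintype S] [Fintype A] (x y : S → A → ℝ) : ℝ :=
  ∑ s, ∑ a, x s a * y s a

/-- The norm `∥x∥_{∞,1} = max_{s∈S} ∑_{a∈A} |x(s,a)|` on `ℝ^{S×A}`. -/
def normInfOne {S A : Type*} [Fintype S] [Fintype A] [Nonempty S] (x : S → A → ℝ) : ℝ :=
  ⨆ s, ∑ a, |x s a|

/-- The `ℓ₁` (total-variation) norm `∥d∥₁ = ∑_{s∈S} |d s|` on `ℝ^S`. -/
def normL1 {S : Type*} [Fintype S] (d : S → ℝ) : ℝ := ∑ s, |d s|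

section MarkovOperator

variable {S A : Type*} [Fintype S] [Fintype A] {P : S → A → S → ℝ} {π : S → A → ℝ}

/-- The Markov operator `P^π` of `markovStep`, as a linear map on all of `ℝ^S`, so that iterates and
discounted series can be handled by linearity and continuity. -/
def markovOp (P : S → A → S → ℝ) (π : S → A → ℝ) : (S → ℝ) →ₗ[ℝ] (S → ℝ) where
  toFun := markovStep P π
  map_add' μ ν := by
    ext s
    simp only [markovStep, Pi.add_apply, mul_add, sum_add_distrib]
  map_smul' c μ := by
    ext s
    simp only [markovStep, Pi.smul_apply, smul_eq_mul, RingHom.id_apply, mul_left_comm _ c, mul_sum]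

lemma iterate_markovStep (t : ℕ) : (markovStep P π)^[t] = ⇑(markovOp P π ^ t) :=
  (Module.End.coe_pow (markovOp P π) t).symm

lemma sum_markovStep_mul (P : S → A → S → ℝ) (π : S → A → ℝ) (μ v : S → ℝ) :
    ∑ s', markovStep P π μ s' * v s' = ∑ s, μ s * ∑ a, π s a * ∑ s', P s a s' * v s' := by
  simp only [markovStep, sum_mul, mul_sum]
  rw [sum_comm]
  refine sum_congr rfl fun s _ => ?_
  rw [sum_comm]
  exact sum_congr rfl fun a _ => sum_congr rfl fun s' _ => by ring

lemma sum_markovStep (hP : IsKernel P) (hπ : IsPolicy π) (μ : S → ℝ) :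
    ∑ s, markovStep P π μ s = ∑ s, μ s := by
  simpa [hP.2, hπ.2] using sum_markovStep_mul P π μ 1

lemma markovStep_nonneg (hP : IsKernel P) (hπ : IsPolicy π) {μ : S → ℝ} (hμ : 0 ≤ μ) :
    0 ≤ markovStep P π μ := fun s' =>
  sum_nonneg fun s _ => sum_nonneg fun a _ =>
    mul_nonneg (mul_nonneg (hP.1 s a s') (hπ.1 s a)) (hμ s)

lemma iterate_markovStep_nonneg (hP : IsKernel P) (hπ : IsPolicy π) {μ : S → ℝ} (hμ : 0 ≤ μ)
    (t : ℕ) : 0 ≤ (markovStep P π)^[t] μ :=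
  Function.Iterate.rec (0 ≤ ·) hμ (fun _ => markovStep_nonneg hP hπ) t

lemma abs_markovStep_le (hP : IsKernel P) (hπ : IsPolicy π) (μ : S → ℝ) (s' : S) :
    |markovStep P π μ s'| ≤ markovStep P π |μ| s' := by
  refine (abs_sum_le_sum_abs _ _).trans (sum_le_sum fun s _ => ?_)
  refine (abs_sum_le_sum_abs _ _).trans_eq (sum_congr rfl fun a _ => ?_)
  rw [abs_mul, abs_of_nonneg (mul_nonneg (hP.1 s a s') (hπ.1 s a)), Pi.abs_apply]

lemma normL1_markovStep_le (hP : IsKernel P) (hπ : IsPolicy π) (μ : S → ℝ) :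
    normL1 (markovStep P π μ) ≤ normL1 μ :=
  calc normL1 (markovStep P π μ) ≤ ∑ s, markovStep P π |μ| s :=
        sum_le_sum fun s _ => abs_markovStep_le hP hπ μ s
    _ = normL1 μ := sum_markovStep hP hπ |μ|

lemma normL1_iterate_markovStep_le (hP : IsKernel P) (hπ : IsPolicy π) (μ : S → ℝ) (t : ℕ) :
    normL1 ((markovStep P π)^[t] μ) ≤ normL1 μ :=
  Function.Iterate.rec (fun x => normL1 x ≤ normL1 μ) le_rfl
    (fun x hx => (normL1_markovStep_le hP hπ x).trans hx) t

lemma summable_pow_mul_iterate_markovStep (hP : IsKernel P) (hπ : IsPolicy π) {γ : ℝ}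
    (hγ : |γ| < 1) (μ : S → ℝ) (s : S) :
    Summable fun t : ℕ => γ ^ t * ((markovStep P π)^[t] μ) s := by
  refine .of_norm_bounded
    ((summable_geometric_of_lt_one (abs_nonneg γ) hγ).mul_right (normL1 μ)) fun t => ?_
  rw [norm_mul, norm_pow, Real.norm_eq_abs, Real.norm_eq_abs]
  gcongr
  calc |((markovStep P π)^[t] μ) s| ≤ normL1 ((markovStep P π)^[t] μ) :=
        single_le_sum (fun u _ => abs_nonneg (((markovStep P π)^[t] μ) u)) (mem_univ s)
    _ ≤ normL1 μ := normL1_iterate_markovStep_le hP hπ μ t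

end MarkovOperator

section Visitation

variable {S A : Type*} [Fintype S] [Fintype A] {P : S → A → S → ℝ} {π : S → A → ℝ} {γ : ℝ}

lemma hasSum_visitDist (hP : IsKernel P) (hπ : IsPolicy π) (hγ : |γ| < 1) (μ : S → ℝ) :
    HasSum (fun t : ℕ => ((1 - γ) * γ ^ t) • (markovStep P π)^[t] μ) (visitDist P γ π μ) := by
  refine Pi.hasSum.2 fun s => ?_
  simpa only [visitDist, Pi.smul_apply, smul_eq_mul, mul_assoc] using
    (summable_pow_mul_iterate_markovStep hP hπ hγ μ s).hasSum.mul_left (1 - γ)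

lemma visitDist_eq_add_markovStep (hP : IsKernel P) (hπ : IsPolicy π) (hγ : |γ| < 1)
    (μ : S → ℝ) :
    visitDist P γ π μ = (1 - γ) • μ + γ • markovStep P π (visitDist P γ π μ) := by
  have hsum := hasSum_visitDist hP hπ hγ μ
  have htail : HasSum (fun t : ℕ => ((1 - γ) * γ ^ (t + 1)) • (markovStep P π)^[t + 1] μ)
      (γ • markovStep P π (visitDist P γ π μ)) := by
    have h := (hsum.mapL (LinearMap.toContinuousLinearMap (markovOp P π))).const_smul γ
    refine h.congr_fun fun t => ?_
    simp only [LinearMap.coe_toContinuousLinearMap', map_smul, Function.iterate_succ_apply',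
      smul_smul]
    congr 1
    ring
  have hsplit := htail.unique ((hasSum_nat_add_iff' 1).2 hsum)
  rw [hsplit, sum_range_one, pow_zero, mul_one, Function.iterate_zero_apply, add_sub_cancel]

lemma visitDist_nonneg (hP : IsKernel P) (hπ : IsPolicy π) (hγ : γ ∈ Set.Ico (0 : ℝ) 1)
    {μ : S → ℝ} (hμ : 0 ≤ μ) : 0 ≤ visitDist P γ π μ := fun s =>
  mul_nonneg (sub_nonneg.2 hγ.2.le) <| tsum_nonneg fun t =>
    mul_nonneg (pow_nonneg hγ.1 t) (iterate_markovStep_nonneg hP hπ hμ t s)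

lemma smul_le_visitDist (hP : IsKernel P) (hπ : IsPolicy π) (hγ : γ ∈ Set.Ico (0 : ℝ) 1)
    {μ : S → ℝ} (hμ : 0 ≤ μ) : (1 - γ) • μ ≤ visitDist P γ π μ := by
  rw [visitDist_eq_add_markovStep hP hπ ((abs_of_nonneg hγ.1).trans_lt hγ.2)]
  exact le_add_of_nonneg_right <|
    smul_nonneg hγ.1 (markovStep_nonneg hP hπ (visitDist_nonneg hP hπ hγ hμ))

end Visitation

section Value

variable {S A : Type*} [Fintype S] [Fintype A] {P : S → A → S → ℝ} {π : S → A → ℝ} {γ : ℝ}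

lemma summable_valueV (hP : IsKernel P) (r : S → A → ℝ) (hπ : IsPolicy π) (hγ : |γ| < 1)
    (μ : S → ℝ) :
    Summable fun t : ℕ => γ ^ t * ∑ s, ((markovStep P π)^[t] μ) s * ∑ a, π s a * r s a := by
  simp only [mul_sum univ _ (γ ^ _), ← mul_assoc]
  exact summable_sum fun s _ => (summable_pow_mul_iterate_markovStep hP hπ hγ μ s).mul_right _

lemma isLinearMap_valueV (hP : IsKernel P) (r : S → A → ℝ) (hπ : IsPolicy π) (hγ : |γ| < 1) :
    IsLinearMap ℝ (valueV P r γ π) where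
  map_add μ ν := by
    rw [valueV, valueV, valueV,
      ← (summable_valueV hP r hπ hγ μ).tsum_add (summable_valueV hP r hπ hγ ν)]
    simp only [iterate_markovStep, map_add, Pi.add_apply, add_mul, sum_add_distrib, mul_add]
  map_smul c μ := by
    rw [valueV, valueV, smul_eq_mul, ← tsum_mul_left]
    simp only [iterate_markovStep, map_smul, Pi.smul_apply, smul_eq_mul, mul_assoc,
      ← mul_sum univ _ c, mul_left_comm _ c]

lemma valueV_eq_sum_dirac [DecidableEq S] (hP : IsKernel P) (r : S → A → ℝ) (hπ : IsPolicy π)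
    (hγ : |γ| < 1) (μ : S → ℝ) :
    valueV P r γ π μ = ∑ s, μ s * valueV P r γ π (fun u => if u = s then 1 else 0) := by
  simpa only [IsLinearMap.mk'_apply, smul_eq_mul, eq_comm] using
    ((isLinearMap_valueV hP r hπ hγ).mk' _).pi_apply_eq_sum_univ μ

lemma valueV_eq_add_markovStep (hP : IsKernel P) (r : S → A → ℝ) (hπ : IsPolicy π)
    (hγ : |γ| < 1) (μ : S → ℝ) :
    valueV P r γ π μ =
      ∑ s, μ s * ∑ a, π s a * r s a + γ * valueV P r γ π (markovStep P π μ) := by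
  rw [valueV, (summable_valueV hP r hπ hγ μ).tsum_eq_zero_add, valueV, ← tsum_mul_left]
  simp only [pow_zero, one_mul, Function.iterate_zero_apply, Function.iterate_succ_apply, pow_succ',
    mul_assoc]

lemma sum_visitDist_mul_reward (hP : IsKernel P) (r : S → A → ℝ) (hπ : IsPolicy π) (hγ : |γ| < 1)
    (μ : S → ℝ) :
    ∑ s, visitDist P γ π μ s * ∑ a, π s a * r s a = (1 - γ) * valueV P r γ π μ := by
  have hsum := hasSum_sum fun s (_ : s ∈ univ) =>
    (Pi.hasSum.1 (hasSum_visitDist hP hπ hγ μ) s).mul_right (∑ a, π s a * r s a)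
  rw [← hsum.tsum_eq, valueV, ← tsum_mul_left]
  simp only [Pi.smul_apply, smul_eq_mul, mul_assoc, mul_sum univ _ (γ ^ _), mul_sum univ _ (1 - γ)]

variable [DecidableEq S]

lemma sum_mul_valueQ_mul (hP : IsKernel P) (r : S → A → ℝ) (hπ : IsPolicy π) (hγ : |γ| < 1)
    (π' : S → A → ℝ) (x : S → ℝ) :
    ∑ s, x s * ∑ a, valueQ P r γ π s a * π' s a =
      ∑ s, x s * ∑ a, π' s a * r s a + γ * valueV P r γ π (markovStep P π' x) := by
  rw [valueV_eq_sum_dirac hP r hπ hγ, sum_markovStep_mul, mul_sum, ← sum_add_distrib]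
  refine sum_congr rfl fun s _ => ?_
  rw [mul_left_comm γ, ← mul_add, mul_sum univ _ γ, ← sum_add_distrib]
  congr 1
  refine sum_congr rfl fun a _ => ?_
  rw [valueQ]
  ring

lemma sum_mul_valueQ_mul_self (hP : IsKernel P) (r : S → A → ℝ) (hπ : IsPolicy π) (hγ : |γ| < 1)
    (μ : S → ℝ) : ∑ s, μ s * ∑ a, valueQ P r γ π s a * π s a = valueV P r γ π μ := by
  rw [sum_mul_valueQ_mul hP r hπ hγ, ← valueV_eq_add_markovStep hP r hπ hγ]

theorem performance_difference (hP : IsKernel P) (r : S → A → ℝ) (hπ : IsPolicy π)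
    {π' : S → A → ℝ} (hπ' : IsPolicy π') (hγ : |γ| < 1) (μ : S → ℝ) :
    ∑ s, visitDist P γ π' μ s *
        (∑ a, valueQ P r γ π s a * π' s a - ∑ a, valueQ P r γ π s a * π s a) =
      (1 - γ) * (valueV P r γ π' μ - valueV P r γ π μ) := by
  set d := visitDist P γ π' μ
  have hV := isLinearMap_valueV hP r hπ hγ
  have hflow : valueV P r γ π d =
      (1 - γ) * valueV P r γ π μ + γ * valueV P r γ π (markovStep P π' d) := by
    simpa only [hV.map_add, hV.map_smul, smul_eq_mul] using
      congrArg (valueV P r γ π) (visitDist_eq_add_markovStep hP hπ' hγ μ)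
  have hπ'_mean : ∑ s, d s * ∑ a, valueQ P r γ π s a * π' s a =
      (1 - γ) * valueV P r γ π' μ + γ * valueV P r γ π (markovStep P π' d) := by
    rw [sum_mul_valueQ_mul hP r hπ hγ, sum_visitDist_mul_reward hP r hπ' hγ]
  simp only [mul_sub, sum_sub_distrib]
  rw [hπ'_mean, sum_mul_valueQ_mul_self hP r hπ hγ, hflow]
  ring

end Value

lemma IsDist.sum_mul_le_iSup {A : Type*} [Fintype A] {p : A → ℝ} (hp : IsDist p) (f : A → ℝ) :
    ∑ a, f a * p a ≤ ⨆ a, f a :=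
  calc ∑ a, f a * p a ≤ ∑ a, (⨆ a, f a) * p a :=
        sum_le_sum fun a _ => mul_le_mul_of_nonneg_right
          (le_ciSup (Set.finite_range f).bddAbove a) (hp.1 a)
    _ = ⨆ a, f a := by rw [← mul_sum, hp.2, mul_one]

lemma IsPolicy.isDist {S A : Type*} [Fintype A] {π : S → A → ℝ} (hπ : IsPolicy π) (s : S) :
    IsDist (π s) := ⟨hπ.1 s, hπ.2 s⟩

section GreedyGap

variable {S A : Type*} [Fintype S] [Fintype A] [DecidableEq S] {P : S → A → S → ℝ}
  {π : S → A → ℝ} {γ : ℝ}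

/-- The greedy gap `max_a Q^π(s,a) − ∑_a Q^π(s,a) π'(a|s)`: how far `π'` is at `s` from acting
greedily with respect to `Q^π`. -/
def greedyGap (P : S → A → S → ℝ) (r : S → A → ℝ) (γ : ℝ) (π π' : S → A → ℝ) (s : S) : ℝ :=
  (⨆ a, valueQ P r γ π s a) - ∑ a, valueQ P r γ π s a * π' s a

lemma greedyGap_nonneg (P : S → A → S → ℝ) (r : S → A → ℝ) (γ : ℝ) (π : S → A → ℝ)
    {π' : S → A → ℝ} (hπ' : IsPolicy π') (s : S) : 0 ≤ greedyGap P r γ π π' s :=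
  sub_nonneg.2 ((hπ'.isDist s).sum_mul_le_iSup _)

/-- The policy completeness
`E_ν(PP, PiW) = max_{π∈PP} min_{π'∈PiW} E_{s∼d^π_ν}[max_a Q^π(s,a) − ∑_a Q^π(s,a) π'(a|s)]`,
for finite sets of policies, so that both extrema are attained. -/
def policyCompleteness (P : S → A → S → ℝ) (r : S → A → ℝ) (γ : ℝ) (ν : S → ℝ)
    (PP PiW : Finset (S → A → ℝ)) (hPP : PP.Nonempty) (hPiW : PiW.Nonempty) : ℝ :=
  PP.sup' hPP fun π => PiW.inf' hPiW fun π' => ∑ s, visitDist P γ π ν s * greedyGap P r γ π π' s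

lemma exists_sum_greedyGap_le_policyCompleteness (P : S → A → S → ℝ) (r : S → A → ℝ) (γ : ℝ)
    (ν : S → ℝ) {PP PiW : Finset (S → A → ℝ)} (hPP : PP.Nonempty) (hPiW : PiW.Nonempty)
    (hπ : π ∈ PP) :
    ∃ π' ∈ PiW, ∑ s, visitDist P γ π ν s * greedyGap P r γ π π' s ≤
      policyCompleteness P r γ ν PP PiW hPP hPiW := by
  obtain ⟨π', hπ', hmin⟩ := exists_mem_eq_inf' hPiW fun π' =>
    ∑ s, visitDist P γ π ν s * greedyGap P r γ π π' s
  exact ⟨π', hπ', hmin.symm.trans_le <| le_sup' (fun π => PiW.inf' hPiW fun π' =>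
    ∑ s, visitDist P γ π ν s * greedyGap P r γ π π' s) hπ⟩

lemma mul_dotSA_gradV (P : S → A → S → ℝ) (r : S → A → ℝ) (hγ : γ ≠ 1) (π : S → A → ℝ)
    (μ : S → ℝ) (y : S → A → ℝ) :
    (1 - γ) * dotSA (gradV P r γ π μ) y =
      ∑ s, visitDist P γ π μ s * ∑ a, valueQ P r γ π s a * y s a := by
  have : 1 - γ ≠ 0 := sub_ne_zero.2 hγ.symm
  simp only [dotSA, gradV, mul_sum]
  refine sum_congr rfl fun s _ => sum_congr rfl fun a _ => ?_
  field_simp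

lemma sum_visitDist_mul_greedyGap_self (P : S → A → S → ℝ) (r : S → A → ℝ) (hγ : γ ≠ 1)
    (π π' : S → A → ℝ) (μ : S → ℝ) :
    ∑ s, visitDist P γ π μ s * greedyGap P r γ π π s =
      ∑ s, visitDist P γ π μ s * greedyGap P r γ π π' s +
        (1 - γ) * dotSA (gradV P r γ π μ) fun s a => π' s a - π s a := by
  rw [mul_dotSA_gradV P r hγ, ← sum_add_distrib]
  refine sum_congr rfl fun s _ => ?_
  simp only [greedyGap, mul_sub, sum_sub_distrib]
  ring

lemma mul_valueV_sub_le_sum_greedyGap (hP : IsKernel P) (r : S → A → ℝ) (hπ : IsPolicy π)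
    {π' : S → A → ℝ} (hπ' : IsPolicy π') (hγ : γ ∈ Set.Ico (0 : ℝ) 1) {μ : S → ℝ} (hμ : 0 ≤ μ) :
    (1 - γ) * (valueV P r γ π' μ - valueV P r γ π μ) ≤
      ∑ s, visitDist P γ π' μ s * greedyGap P r γ π π s := by
  rw [← performance_difference hP r hπ hπ' ((abs_of_nonneg hγ.1).trans_lt hγ.2)]
  exact sum_le_sum fun s _ => mul_le_mul_of_nonneg_left
    (sub_le_sub_right ((hπ'.isDist s).sum_mul_le_iSup _) _) (visitDist_nonneg hP hπ' hγ hμ s)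

end GreedyGap

section GradientDomination

variable {S A : Type*} [Fintype S] [Fintype A] {P : S → A → S → ℝ} {π π' : S → A → ℝ} {γ : ℝ}

lemma iSup_visitDist_div_nonneg (hP : IsKernel P) (hπ : IsPolicy π)
    (hγ : γ ∈ Set.Ico (0 : ℝ) 1) {μ ν : S → ℝ} (hμ : 0 ≤ μ) (hν : 0 ≤ ν) :
    0 ≤ ⨆ s, visitDist P γ π μ s / ν s :=
  Real.iSup_nonneg fun s => div_nonneg (visitDist_nonneg hP hπ hγ hμ s) (hν s)

lemma visitDist_le_iSup_div_mul_visitDist (hP : IsKernel P) (hπ : IsPolicy π) (hπ' : IsPolicy π')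
    (hγ : γ ∈ Set.Ico (0 : ℝ) 1) {μ ν : S → ℝ} (hμ : 0 ≤ μ) (hν : ∀ s, 0 < ν s) (s : S) :
    visitDist P γ π' μ s ≤
      (⨆ u, visitDist P γ π' μ u / ν u) / (1 - γ) * visitDist P γ π ν s := by
  set D := ⨆ u, visitDist P γ π' μ u / ν u
  have hD : 0 ≤ D := iSup_visitDist_div_nonneg hP hπ' hγ hμ fun u => (hν u).le
  have hν_le : (1 - γ) * ν s ≤ visitDist P γ π ν s :=
    smul_le_visitDist hP hπ hγ (fun u => (hν u).le) s
  calc visitDist P γ π' μ s ≤ D * ν s :=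
        (div_le_iff₀ (hν s)).1 (le_ciSup (f := fun u => visitDist P γ π' μ u / ν u)
          (Set.finite_range _).bddAbove s)
    _ = D / (1 - γ) * ((1 - γ) * ν s) := by
        have : 1 - γ ≠ 0 := (sub_pos.2 hγ.2).ne'
        field_simp
    _ ≤ D / (1 - γ) * visitDist P γ π ν s :=
        mul_le_mul_of_nonneg_left hν_le (div_nonneg hD (sub_nonneg.2 hγ.2.le))

theorem valueV_sub_le_of_visitDist_le [DecidableEq S] (hP : IsKernel P) (r : S → A → ℝ)
    (hπ : IsPolicy π) (hπ' : IsPolicy π') (hγ : γ ∈ Set.Ico (0 : ℝ) 1) {μ ν : S → ℝ} (hμ : 0 ≤ μ)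
    {C : ℝ} (hC : ∀ s, visitDist P γ π' μ s ≤ C * visitDist P γ π ν s) (π₂ : S → A → ℝ) :
    valueV P r γ π' μ - valueV P r γ π μ ≤
      C * ((∑ s, visitDist P γ π ν s * greedyGap P r γ π π₂ s) / (1 - γ) +
        dotSA (gradV P r γ π ν) fun s a => π₂ s a - π s a) := by
  have h1γ : 0 < 1 - γ := sub_pos.2 hγ.2
  refine le_of_mul_le_mul_left ?_ h1γ
  calc (1 - γ) * (valueV P r γ π' μ - valueV P r γ π μ)
      ≤ ∑ s, visitDist P γ π' μ s * greedyGap P r γ π π s :=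
        mul_valueV_sub_le_sum_greedyGap hP r hπ hπ' hγ hμ
    _ ≤ ∑ s, C * visitDist P γ π ν s * greedyGap P r γ π π s :=
        sum_le_sum fun s _ => mul_le_mul_of_nonneg_right (hC s) (greedyGap_nonneg P r γ π hπ s)
    _ = C * (∑ s, visitDist P γ π ν s * greedyGap P r γ π π₂ s +
          (1 - γ) * dotSA (gradV P r γ π ν) fun s a => π₂ s a - π s a) := by
        rw [← sum_visitDist_mul_greedyGap_self P r hγ.2.ne, mul_sum]
        simp only [mul_assoc]
    _ = (1 - γ) * (C * ((∑ s, visitDist P γ π ν s * greedyGap P r γ π π₂ s) / (1 - γ) +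
          dotSA (gradV P r γ π ν) fun s a => π₂ s a - π s a)) := by field_simp

theorem gradient_domination_nu_reset_general [DecidableEq S] (hP : IsKernel P) (r : S → A → ℝ)
    (hγ : γ ∈ Set.Ico (0 : ℝ) 1) {d₀ ν : S → ℝ} (hd₀ : 0 ≤ d₀) (hν : ∀ s, 0 < ν s)
    {PP PiW : Finset (S → A → ℝ)} (hPP : PP.Nonempty) (hPiW : PiW.Nonempty)
    (hmem : π ∈ PP) (hπ : IsPolicy π) (hπ' : IsPolicy π') :
    valueV P r γ π' d₀ - valueV P r γ π d₀ ≤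
      (⨆ s, visitDist P γ π' d₀ s / ν s) / (1 - γ) *
        (policyCompleteness P r γ ν PP PiW hPP hPiW / (1 - γ) +
          PiW.sup' hPiW fun π₂ => dotSA (gradV P r γ π ν) fun s a => π₂ s a - π s a) := by
  have h1γ : 0 ≤ 1 - γ := sub_nonneg.2 hγ.2.le
  have hD := iSup_visitDist_div_nonneg hP hπ' hγ hd₀ fun s => (hν s).le
  obtain ⟨π₂, hπ₂, hgap⟩ :=
    exists_sum_greedyGap_le_policyCompleteness P r γ ν hPP hPiW hmem
  refine (valueV_sub_le_of_visitDist_le hP r hπ hπ' hγ hd₀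
    (visitDist_le_iSup_div_mul_visitDist hP hπ hπ' hγ hd₀ hν) π₂).trans ?_
  gcongr
  exact le_sup' (fun π₂ : S → A → ℝ =>
    dotSA (gradV P r γ π ν) fun s a => π₂ s a - π s a) hπ₂

end GradientDomination

/-- **Gradient domination with `ν`-restarts (Lemma `lem:domnu`).**
Let `PP` and `PiW` be finite nonempty sets of policies, `πstar` an optimal policy
(w.r.t. initial distribution `d₀`), and `ν` an initial distribution with `ν(s) > 0` for
all `s`, so `D∞ = max_s d^{πstar}(s)/ν(s)` is finite. With policy completeness
`E_ν(PP,PiW) = max_{π∈PP} min_{π'∈PiW} E_{s∼d^π_ν}[max_a Q^π(s,a) − ∑_a Q^π(s,a)·π'(a|s)]`,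
for every `π ∈ PP`:
`V* − V^π ≤ (D∞/(1−γ))·( E_ν(PP,PiW)/(1−γ) + max_{π'∈PiW} (∇_π V^π_ν)ᵀ(π' − π) )`. -/
theorem gradient_domination_nu_reset {S A : Type*} [Fintype S] [Fintype A] [Nonempty S]
    [Nonempty A] [DecidableEq S]
    (P : S → A → S → ℝ) (r : S → A → ℝ) (γ : ℝ) (d₀ : S → ℝ)
    (hP : IsKernel P) (hr : ∀ s a, r s a ∈ Set.Icc (0 : ℝ) 1)
    (hγ : γ ∈ Set.Ico (0 : ℝ) 1) (hd₀ : IsDist d₀)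
    (PP PiW : Finset (S → A → ℝ)) (hPPne : PP.Nonempty) (hPiWne : PiW.Nonempty)
    (hPPpol : ∀ π ∈ PP, IsPolicy π) (hPiWpol : ∀ π' ∈ PiW, IsPolicy π')
    (πstar : S → A → ℝ) (hπstar : IsPolicy πstar)
    (hopt : ∀ π : S → A → ℝ, IsPolicy π → valueV P r γ π d₀ ≤ valueV P r γ πstar d₀)
    (ν : S → ℝ) (hν : IsDist ν) (hνpos : ∀ s : S, 0 < ν s) :
    ∀ π ∈ PP,
      valueV P r γ πstar d₀ - valueV P r γ π d₀ ≤
        (⨆ s, visitDist P γ πstar d₀ s / ν s) / (1 - γ) *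
          ((PP.sup' hPPne fun π₁ => PiW.inf' hPiWne fun π₂ =>
              ∑ s, visitDist P γ π₁ ν s *
                ((⨆ a, valueQ P r γ π₁ s a) - ∑ a, valueQ P r γ π₁ s a * π₂ s a)) / (1 - γ) +
            PiW.sup' hPiWne fun π₂ =>
              dotSA (gradV P r γ π ν) fun s a => π₂ s a - π s a) := by
  intro π hπ
  exact gradient_domination_nu_reset_general hP r hγ hd₀.1 hνpos hPPne hPiWne hπ
    (hPPpol π hπ) hπstar
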